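/- Let d ≥ 2, let F ⊂ ℕ be a finite set, and for each n ∈ F let u_n⁺ and u_n⁻ be spherical harmonics of degree n on S^d. Define u(t,x) = ∑_{n∈F} ( e^{it(n+(d-1)/2)} u_n⁺(x) + e^{-it(n+(d-1)/2)} u_n⁻(x) ). Then ∫_0^{2π} ∫_{S^d ∩ {x_{d+1}>0}} |∂_t u(t,x)|² dσ(x) dt = π ∑_{n∈F} (n+(d-1)/2)² ( ‖u_n⁺‖²_{L²(S^d,σ)} + ‖u_n⁻‖²_{L²(S^d,σ)} ). -/

import Mathlib

open MeasureTheory Complex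

/-!
For fixed `t` the function `∂ₜu(t, ·)` is a finite sum of terms `e^{itω} v_ω`, where `v_ω` lies in
`L²` of the open hemisphere and any two frequencies `ω` differ by an integer. Parseval's identity
for trigonometric polynomials with values in this Hilbert space removes all the cross terms.
Spherical harmonics of degree `n` satisfy `v(-x) = (-1)ⁿ v(x)` and the equator is a null set, so
half of the mass of each `|v|²` lies on the hemisphere. This turns the factor `2π` into `π`.
-/

section Parseval

open scoped InnerProductSpace

variable {ι H : Type*} [NormedAddCommGroup H] [InnerProductSpace ℂ H]

lemma integral_exp_intCast_mul_I (m : ℤ) :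
    ∫ t in (0 : ℝ)..2 * Real.pi, exp (m * I * t) = if m = 0 then 2 * (Real.pi : ℂ) else 0 := by
  split_ifs with hm
  · simp [hm]
  · have hperiod : exp (m * I * (2 * Real.pi : ℝ)) = 1 := by
      rw [← exp_int_mul_two_pi_mul_I m]
      push_cast
      ring_nf
    rw [integral_exp_mul_complex (mul_ne_zero (mod_cast hm) I_ne_zero), hperiod]
    simp

lemma ofReal_norm_sq_eq_inner_self (v : H) : ((‖v‖ ^ 2 : ℝ) : ℂ) = ⟪v, v⟫_ℂ :=
  (ofReal_pow _ _).trans (inner_self_eq_norm_sq_to_K v).symm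

lemma ofReal_norm_sq_sum_exp_smul (s : Finset ι) (c : ℝ) (m : ι → ℤ) (v : ι → H) (t : ℝ) :
    ((‖∑ j ∈ s, exp (I * t * ((c : ℂ) + m j)) • v j‖ ^ 2 : ℝ) : ℂ) =
      ∑ j ∈ s, ∑ k ∈ s, exp ((m k - m j : ℤ) * I * t) * ⟪v j, v k⟫_ℂ := by
  have hphase (j k : ι) :
      (starRingEnd ℂ) (exp (I * t * ((c : ℂ) + m j))) * exp (I * t * ((c : ℂ) + m k)) =
        exp ((m k - m j : ℤ) * I * t) := by
    rw [← exp_conj, ← exp_add]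
    simp only [map_mul, map_add, conj_I, conj_ofReal, map_intCast]
    push_cast
    ring_nf
  rw [ofReal_norm_sq_eq_inner_self, sum_inner]
  refine Finset.sum_congr rfl fun j _ ↦ ?_
  rw [inner_sum]
  refine Finset.sum_congr rfl fun k _ ↦ ?_
  rw [inner_smul_left, inner_smul_right, ← mul_assoc, hphase]

lemma integral_norm_sq_sum_exp_smul (s : Finset ι) (c : ℝ) {m : ι → ℤ} {v : ι → H}
    (hm : Set.InjOn m {j ∈ s | v j ≠ 0}) :
    ∫ t in (0 : ℝ)..2 * Real.pi, ‖∑ j ∈ s, exp (I * t * ((c : ℂ) + m j)) • v j‖ ^ 2 =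
      2 * Real.pi * ∑ j ∈ s, ‖v j‖ ^ 2 := by
  classical
  have horth (j) (hj : j ∈ s) (k) (hk : k ∈ s) :
      ∫ t in (0 : ℝ)..2 * Real.pi, exp ((m k - m j : ℤ) * I * t) * ⟪v j, v k⟫_ℂ =
        if j = k then 2 * Real.pi * (‖v j‖ : ℂ) ^ 2 else 0 := by
    rw [intervalIntegral.integral_mul_const, integral_exp_intCast_mul_I]
    split_ifs with hmjk hjk hjk
    · simp [hjk, inner_self_eq_norm_sq_to_K]
    · have hzero : v j = 0 ∨ v k = 0 := by
        by_contra! hne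
        exact hjk (hm ⟨hj, hne.1⟩ ⟨hk, hne.2⟩ (sub_eq_zero.mp hmjk).symm)
      rcases hzero with h | h <;> simp [h]
    · simp [hjk] at hmjk
    · simp
  apply ofReal_injective
  simp_rw [← intervalIntegral.integral_ofReal, ofReal_norm_sq_sum_exp_smul]
  rw [intervalIntegral.integral_finsetSum fun j _ ↦
      Continuous.intervalIntegrable (by fun_prop) _ _]
  simp only [ofReal_mul, ofReal_sum, ofReal_pow, ofReal_ofNat, Finset.mul_sum]
  refine Finset.sum_congr rfl fun j hj ↦ ?_
  rw [intervalIntegral.integral_finsetSum fun k _ ↦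
      Continuous.intervalIntegrable (by fun_prop) _ _,
    Finset.sum_congr rfl (horth j hj), Finset.sum_ite_eq, if_pos hj]

end Parseval

section SquareIntegrable

variable {ι X H : Type*} [MeasurableSpace X] {ν : Measure X}
  [NormedAddCommGroup H] [InnerProductSpace ℂ H]

lemma Lp_two_norm_sq_eq_integral (f : Lp H 2 ν) : ‖f‖ ^ 2 = ∫ x, ‖f x‖ ^ 2 ∂ν := by
  apply ofReal_injective
  rw [ofReal_norm_sq_eq_inner_self, L2.inner_def, ← integral_complex_ofReal]
  simp only [ofReal_norm_sq_eq_inner_self]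

lemma coeFn_sum_smul_ae_eq {s : Finset ι} {v : ι → Lp H 2 ν} {f : ι → X → H}
    (hv : ∀ j ∈ s, v j =ᵐ[ν] f j) (z : ι → ℂ) :
    ⇑(∑ j ∈ s, z j • v j) =ᵐ[ν] fun x ↦ ∑ j ∈ s, z j • f j x := by
  have hsmul : ∀ j ∈ s, ⇑(z j • v j) =ᵐ[ν] fun x ↦ z j • f j x := fun j hj ↦
    (Lp.coeFn_smul _ _).trans ((hv j hj).const_smul _)
  filter_upwards [Lp.coeFn_finsetSum s fun j ↦ z j • v j,
    (Finset.eventually_all s).2 hsmul] with x hx hxs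
  rw [hx, Finset.sum_apply]
  exact Finset.sum_congr rfl hxs

lemma integral_integral_norm_sq_sum_exp_smul (s : Finset ι) (c : ℝ) {m : ι → ℤ}
    {f : ι → X → H} (hf : ∀ j ∈ s, MemLp (f j) 2 ν) (hm : Set.InjOn m {j ∈ s | f j ≠ 0}) :
    ∫ t in (0 : ℝ)..2 * Real.pi, ∫ x, ‖∑ j ∈ s, exp (I * t * ((c : ℂ) + m j)) • f j x‖ ^ 2 ∂ν =
      2 * Real.pi * ∑ j ∈ s, ∫ x, ‖f j x‖ ^ 2 ∂ν := by
  classical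
  let v (j : ι) : Lp H 2 ν := if hj : j ∈ s then (hf j hj).toLp (f j) else 0
  have hv : ∀ j ∈ s, v j =ᵐ[ν] f j := fun j hj ↦ by
    simpa only [v, dif_pos hj] using (hf j hj).coeFn_toLp
  have hsupp : {j | j ∈ s ∧ v j ≠ 0} ⊆ {j | j ∈ s ∧ f j ≠ 0} := fun j ⟨hj, hvj⟩ ↦
    ⟨hj, fun h ↦ hvj <| Lp.ext <| (hv j hj).trans <| by
      rw [h]
      exact (Lp.coeFn_zero H 2 ν).symm⟩
  calc
    _ = ∫ t in (0 : ℝ)..2 * Real.pi, ‖∑ j ∈ s, exp (I * t * ((c : ℂ) + m j)) • v j‖ ^ 2 := by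
      congr! 2 with t
      rw [Lp_two_norm_sq_eq_integral]
      refine integral_congr_ae ?_
      filter_upwards [coeFn_sum_smul_ae_eq hv fun j ↦ exp (I * t * ((c : ℂ) + m j))] with x hx
      rw [hx]
    _ = 2 * Real.pi * ∑ j ∈ s, ‖v j‖ ^ 2 := integral_norm_sq_sum_exp_smul s c (hm.mono hsupp)
    _ = _ := by
      congr! 2 with j hj
      rw [Lp_two_norm_sq_eq_integral]
      exact integral_congr_ae <| (hv j hj).mono fun x hx ↦ by simp only [hx]

lemma deriv_sum_exp_smul (s : Finset ι) (w : ι → ℂ) (v : ι → H) (t : ℝ) :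
    deriv (fun r : ℝ ↦ ∑ j ∈ s, exp (I * r * w j) • v j) t =
      ∑ j ∈ s, exp (I * t * w j) • (I * w j) • v j := by
  refine (HasDerivAt.fun_sum fun j _ ↦ ?_).deriv
  have hphase : HasDerivAt (fun r : ℝ ↦ I * r * w j) (I * w j) t := by
    simpa using ((ofRealCLM.hasDerivAt (x := t)).const_mul I).mul_const (w j)
  rw [smul_smul]
  exact hphase.cexp.smul_const (v j)

lemma integral_integral_norm_sq_deriv_sum_exp_smul (s : Finset ι) (c : ℝ) {m : ι → ℤ}
    {f : ι → X → H} (hf : ∀ j ∈ s, MemLp (f j) 2 ν) (hm : Set.InjOn m {j ∈ s | c + m j ≠ 0}) :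
    ∫ t in (0 : ℝ)..2 * Real.pi,
        ∫ x, ‖deriv (fun r : ℝ ↦ ∑ j ∈ s, exp (I * r * ((c : ℂ) + m j)) • f j x) t‖ ^ 2 ∂ν =
      2 * Real.pi * ∑ j ∈ s, (c + m j) ^ 2 * ∫ x, ‖f j x‖ ^ 2 ∂ν := by
  let w (j : ι) : ℂ := I * ((c : ℂ) + m j)
  have hw (j : ι) : ‖w j‖ ^ 2 = (c + m j) ^ 2 := by
    simp only [w, norm_mul, norm_I, one_mul]
    rw [← ofReal_intCast, ← ofReal_add, norm_real, Real.norm_eq_abs, sq_abs]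
  have hsupp : {j | j ∈ s ∧ w j • f j ≠ 0} ⊆ {j | j ∈ s ∧ c + m j ≠ 0} := fun j ⟨hj, hne⟩ ↦
    ⟨hj, fun h ↦ hne <| by simp [w, ← ofReal_intCast, ← ofReal_add, h]⟩
  simp_rw [deriv_sum_exp_smul]
  refine (integral_integral_norm_sq_sum_exp_smul s c (fun j hj ↦ (hf j hj).const_smul (w j))
    (hm.mono hsupp)).trans ?_
  simp only [Pi.smul_apply, norm_smul, mul_pow, integral_const_mul, hw]

end SquareIntegrable

section Sphere

open Metric
open scoped Pointwise

variable {E : Type*} [NormedAddCommGroup E] [NormedSpace ℝ E] [MeasurableSpace E] [BorelSpace E]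

lemma measurePreserving_neg_toSphere (μ : Measure E) [μ.IsNegInvariant] :
    MeasurePreserving (fun x : sphere (0 : E) 1 ↦ -x) μ.toSphere μ.toSphere := by
  have hmeas : Measurable fun x : sphere (0 : E) 1 ↦ -x := continuous_neg.measurable
  refine ⟨hmeas, Measure.ext fun A hA ↦ ?_⟩
  have himage : ((↑) '' ((fun x : sphere (0 : E) 1 ↦ -x) ⁻¹' A) : Set E) = -((↑) '' A) := by
    rw [← Set.image_neg_eq_neg, ← Set.image_eq_preimage_of_inverse neg_neg neg_neg]
    simp only [Set.image_image, coe_neg_sphere]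
  rw [Measure.map_apply hmeas hA, Measure.toSphere_apply' _ hA,
    Measure.toSphere_apply' _ (hmeas hA), himage, Set.smul_neg, Measure.measure_neg]

variable [FiniteDimensional ℝ E] (μ : Measure E) [μ.IsAddHaarMeasure] {ℓ : E →L[ℝ] ℝ}

lemma toSphere_setOf_apply_eq_zero (hℓ : ℓ ≠ 0) :
    μ.toSphere {x : sphere (0 : E) 1 | ℓ x = 0} = 0 := by
  have hker : ℓ.toLinearMap.ker ≠ ⊤ := fun h ↦
    hℓ <| ContinuousLinearMap.coe_injective <| LinearMap.ker_eq_top.mp h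
  have hclosed : IsClosed {x : sphere (0 : E) 1 | ℓ x = 0} :=
    isClosed_eq (by fun_prop) continuous_const
  rw [Measure.toSphere_apply' _ hclosed.measurableSet,
    measure_mono_null _ (Measure.addHaar_submodule μ _ hker), mul_zero]
  rintro _ ⟨r, -, _, ⟨x, hx, rfl⟩, rfl⟩
  simpa using Or.inr hx

lemma two_mul_setIntegral_hemisphere (hℓ : ℓ ≠ 0) {g : sphere (0 : E) 1 → ℝ}
    (hg : Integrable g μ.toSphere) (hg_even : ∀ x, g (-x) = g x) :
    2 * ∫ x in {x | 0 < ℓ x}, g x ∂μ.toSphere = ∫ x, g x ∂μ.toSphere := by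
  have hmeas : MeasurableSet {x : sphere (0 : E) 1 | 0 < ℓ x} :=
    (isOpen_lt continuous_const (by fun_prop)).measurableSet
  have hcompl : (fun x ↦ -x) ⁻¹' {x : sphere (0 : E) 1 | 0 < ℓ x} =ᵐ[μ.toSphere]
      ({x : sphere (0 : E) 1 | 0 < ℓ x}ᶜ : Set _) := by
    filter_upwards [measure_eq_zero_iff_ae_notMem.mp (toSphere_setOf_apply_eq_zero μ hℓ)] with x hx
    refine propext ?_
    change 0 < ℓ (-(x : E)) ↔ ¬ 0 < ℓ x
    rw [map_neg, Left.neg_pos_iff, not_lt]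
    exact ⟨le_of_lt, fun h ↦ lt_of_le_of_ne h hx⟩
  have hsouth : ∫ x in {x | 0 < ℓ x}ᶜ, g x ∂μ.toSphere =
      ∫ x in {x | 0 < ℓ x}, g x ∂μ.toSphere := by
    rw [← setIntegral_congr_set hcompl]
    simpa only [hg_even] using (measurePreserving_neg_toSphere μ).setIntegral_preimage_emb
      (Homeomorph.neg _).measurableEmbedding g {x | 0 < ℓ x}
  rw [← integral_add_compl hmeas hg, hsouth, two_mul]

lemma integral_hemisphere_norm_sq_deriv_sum_exp_smul {ι H : Type*} [NormedAddCommGroup H]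
    [InnerProductSpace ℂ H] (hℓ : ℓ ≠ 0) (s : Finset ι) (c : ℝ) {m : ι → ℤ}
    {f : ι → sphere (0 : E) 1 → H} (hf : ∀ j ∈ s, MemLp (f j) 2 μ.toSphere)
    (hf_even : ∀ j ∈ s, ∀ x, ‖f j (-x)‖ = ‖f j x‖) (hm : Set.InjOn m {j ∈ s | c + m j ≠ 0}) :
    ∫ t in (0 : ℝ)..2 * Real.pi, ∫ x in {x | 0 < ℓ x},
        ‖deriv (fun r : ℝ ↦ ∑ j ∈ s, exp (I * r * ((c : ℂ) + m j)) • f j x) t‖ ^ 2 ∂μ.toSphere =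
      Real.pi * ∑ j ∈ s, (c + m j) ^ 2 * ∫ x, ‖f j x‖ ^ 2 ∂μ.toSphere := by
  rw [integral_integral_norm_sq_deriv_sum_exp_smul s c (fun j hj ↦ (hf j hj).restrict _) hm,
    mul_assoc, mul_left_comm, Finset.mul_sum]
  congr! 2 with j hj
  have hhalf := two_mul_setIntegral_hemisphere μ hℓ
    ((memLp_two_iff_integrable_sq_norm (hf j hj).1).1 (hf j hj)) fun x ↦ by rw [hf_even j hj]
  rw [← hhalf, mul_left_comm]

end Sphere

section HomogeneousPolynomials

open MvPolynomial Metric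

lemma eval_smul_of_isHomogeneous {σ R : Type*} [CommSemiring R] {φ : MvPolynomial σ R} {n : ℕ}
    (hφ : φ.IsHomogeneous n) (r : R) (x : σ → R) : eval (r • x) φ = r ^ n * eval x φ := by
  rw [eval_eq, eval_eq, Finset.mul_sum]
  refine Finset.sum_congr rfl fun k hk ↦ ?_
  rw [hφ.degree_eq_sum_deg_support hk]
  simp only [Pi.smul_apply, smul_eq_mul, mul_pow, Finset.prod_mul_distrib,
    Finset.prod_pow_eq_pow_sum]
  ring

variable {σ : Type*} [Fintype σ]

lemma norm_eval_neg_sphere {φ : MvPolynomial σ ℂ} {n : ℕ} (hφ : φ.IsHomogeneous n)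
    (x : sphere (0 : EuclideanSpace ℝ σ) 1) :
    ‖eval (fun i ↦ ((-x : sphere (0 : EuclideanSpace ℝ σ) 1).1 i : ℂ)) φ‖ =
      ‖eval (fun i ↦ (x.1 i : ℂ)) φ‖ := by
  have hneg : (fun i ↦ ((-x : sphere (0 : EuclideanSpace ℝ σ) 1).1 i : ℂ)) =
      (-1 : ℂ) • fun i ↦ (x.1 i : ℂ) := by
    ext i
    simp
  rw [hneg, eval_smul_of_isHomogeneous hφ, norm_mul, norm_pow, norm_neg, norm_one, one_pow, one_mul]

lemma memLp_eval_sphere (φ : MvPolynomial σ ℂ) (p : ENNReal)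
    (ν : Measure (sphere (0 : EuclideanSpace ℝ σ) 1)) [IsFiniteMeasureOnCompacts ν] :
    MemLp (fun x : sphere (0 : EuclideanSpace ℝ σ) 1 ↦ eval (fun i ↦ (x.1 i : ℂ)) φ) p ν := by
  have hcont : Continuous fun x : sphere (0 : EuclideanSpace ℝ σ) 1 ↦
      eval (fun i ↦ (x.1 i : ℂ)) φ :=
    (continuous_eval φ).comp (by fun_prop)
  exact hcont.memLp_of_hasCompactSupport (HasCompactSupport.of_compactSpace _)

end HomogeneousPolynomials

/-- The integer `m` such that `m + (d - 1) / 2` is the frequency `n + (d - 1) / 2` (left summand)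
or its negative (right summand). -/
def frequencyIndex (d : ℕ) : ℕ ⊕ ℕ → ℤ :=
  Sum.elim (fun n ↦ n) (fun n ↦ -(n + d - 1))

lemma shift_add_frequencyIndex_inl (d n : ℕ) :
    ((d : ℝ) - 1) / 2 + frequencyIndex d (.inl n) = n + ((d : ℝ) - 1) / 2 := by
  simp [frequencyIndex, add_comm]

lemma shift_add_frequencyIndex_inr (d n : ℕ) :
    ((d : ℝ) - 1) / 2 + frequencyIndex d (.inr n) = -(n + ((d : ℝ) - 1) / 2) := by
  simp only [frequencyIndex, Sum.elim_inr, Int.cast_neg, Int.cast_sub, Int.cast_add,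
    Int.cast_natCast, Int.cast_one]
  ring

-- For `d = 1` the frequency `0` occurs twice, but it does not contribute to `∂ₜu`.
lemma injOn_frequencyIndex {d : ℕ} (hd : 1 ≤ d) :
    Set.InjOn (frequencyIndex d) {j | ((d : ℝ) - 1) / 2 + frequencyIndex d j ≠ 0} := by
  have hmixed (n k : ℕ) (h : (n : ℤ) = -(k + d - 1)) :
      ((d : ℝ) - 1) / 2 + frequencyIndex d (.inl n) = 0 := by
    obtain ⟨rfl, rfl⟩ : n = 0 ∧ d = 1 := by omega
    simp [frequencyIndex]
  rintro (n | n) hn (k | k) hk h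
  · exact congrArg Sum.inl (Int.ofNat_inj.mp h)
  · exact absurd (hmixed n k h) hn
  · exact absurd (hmixed k n h.symm) hk
  · refine congrArg Sum.inr ?_
    simp only [frequencyIndex, Sum.elim_inr] at h
    omega

/-- The wave equation on `S^d` is the case `dim E = d + 1`: the parameter `d` enters only through
the frequencies. -/
theorem observability_perturbed_wave_sphere_general {E : Type*} [NormedAddCommGroup E]
    [NormedSpace ℝ E] [FiniteDimensional ℝ E] [MeasurableSpace E] [BorelSpace E]
    (μ : Measure E) [μ.IsAddHaarMeasure] {ℓ : E →L[ℝ] ℝ} (hℓ : ℓ ≠ 0)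
    {d : ℕ} (hd : 1 ≤ d) (F : Finset ℕ) (f g : ℕ → Metric.sphere (0 : E) 1 → ℂ)
    (hf : ∀ n ∈ F, MemLp (f n) 2 μ.toSphere) (hg : ∀ n ∈ F, MemLp (g n) 2 μ.toSphere)
    (hf_even : ∀ n ∈ F, ∀ x, ‖f n (-x)‖ = ‖f n x‖) (hg_even : ∀ n ∈ F, ∀ x, ‖g n (-x)‖ = ‖g n x‖)
    (u : ℝ → Metric.sphere (0 : E) 1 → ℂ)
    (hu : ∀ t x, u t x = ∑ n ∈ F,
      (exp (I * t * ((n : ℂ) + ((d : ℂ) - 1) / 2)) * f n x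
        + exp (-(I * t * ((n : ℂ) + ((d : ℂ) - 1) / 2))) * g n x)) :
    ∫ t in (0 : ℝ)..2 * Real.pi,
        ∫ x in {x | 0 < ℓ x}, ‖deriv (fun r ↦ u r x) t‖ ^ 2 ∂μ.toSphere =
      Real.pi * ∑ n ∈ F, ((n : ℝ) + ((d : ℝ) - 1) / 2) ^ 2 *
        (∫ x, ‖f n x‖ ^ 2 ∂μ.toSphere + ∫ x, ‖g n x‖ ^ 2 ∂μ.toSphere) := by
  let v : ℕ ⊕ ℕ → Metric.sphere (0 : E) 1 → ℂ := Sum.elim f g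
  have hv : ∀ j ∈ F.disjSum F, MemLp (v j) 2 μ.toSphere := by
    rintro (n | n) hn
    · exact hf n (Finset.inl_mem_disjSum.mp hn)
    · exact hg n (Finset.inr_mem_disjSum.mp hn)
  have hv_even : ∀ j ∈ F.disjSum F, ∀ x, ‖v j (-x)‖ = ‖v j x‖ := by
    rintro (n | n) hn
    · exact hf_even n (Finset.inl_mem_disjSum.mp hn)
    · exact hg_even n (Finset.inr_mem_disjSum.mp hn)
  have hu_sum (t : ℝ) (x : Metric.sphere (0 : E) 1) : u t x = ∑ j ∈ F.disjSum F,
      exp (I * t * ((((d : ℝ) - 1) / 2 : ℝ) + frequencyIndex d j)) • v j x := by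
    rw [hu, Finset.sum_disjSum, ← Finset.sum_add_distrib]
    refine Finset.sum_congr rfl fun n _ ↦ ?_
    rw [← ofReal_intCast, ← ofReal_intCast, ← ofReal_add, ← ofReal_add,
      shift_add_frequencyIndex_inl, shift_add_frequencyIndex_inr]
    simp only [v, Sum.elim_inl, Sum.elim_inr, smul_eq_mul]
    push_cast
    rw [mul_neg]
  simp_rw [hu_sum]
  rw [integral_hemisphere_norm_sq_deriv_sum_exp_smul μ hℓ _ _ hv hv_even
      ((injOn_frequencyIndex hd).mono fun _ hj ↦ hj.2),
    Finset.sum_disjSum, ← Finset.sum_add_distrib]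
  simp only [shift_add_frequencyIndex_inl, shift_add_frequencyIndex_inr, neg_sq, ← mul_add, v,
    Sum.elim_inl, Sum.elim_inr]

lemma euclideanSpace_proj_ne_zero {ι : Type*} [Finite ι] (i : ι) :
    EuclideanSpace.proj (𝕜 := ℝ) i ≠ (0 : EuclideanSpace ℝ ι →L[ℝ] ℝ) := by
  classical
  intro h
  simpa using congrArg (fun ℓ ↦ ℓ (EuclideanSpace.single i 1)) h

/-- Observability identity on `S^d` (`d ≥ 2`): for a finite superposition
`u(t,x) = ∑_{n ∈ F} (e^{it(n+(d-1)/2)} uₙ⁺(x) + e^{-it(n+(d-1)/2)} uₙ⁻(x))`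
of spherical harmonics, the time–space integral of `|∂ₜu|²` over
`[0,2π] × (upper hemisphere)` equals
`π ∑_{n ∈ F} (n+(d-1)/2)² (‖uₙ⁺‖² + ‖uₙ⁻‖²)`. -/
theorem observability_perturbed_wave_sphere
    (d : ℕ) (hd : 2 ≤ d) (F : Finset ℕ)
    (p q : ℕ → MvPolynomial (Fin (d + 1)) ℂ)
    (hphom : ∀ n ∈ F, (p n).IsHomogeneous n)
    (hqhom : ∀ n ∈ F, (q n).IsHomogeneous n)
    (hpharm : ∀ n ∈ F, (∑ i : Fin (d + 1),
      MvPolynomial.pderiv i (MvPolynomial.pderiv i (p n))) = 0)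
    (hqharm : ∀ n ∈ F, (∑ i : Fin (d + 1),
      MvPolynomial.pderiv i (MvPolynomial.pderiv i (q n))) = 0)
    (u : ℝ → Metric.sphere (0 : EuclideanSpace ℝ (Fin (d + 1))) 1 → ℂ)
    (hu : ∀ t x, u t x = ∑ n ∈ F,
      (Complex.exp (I * t * ((n : ℂ) + ((d : ℂ) - 1) / 2)) *
          MvPolynomial.eval
            (fun i => ((x : EuclideanSpace ℝ (Fin (d + 1))) i : ℂ)) (p n)
        + Complex.exp (-(I * t * ((n : ℂ) + ((d : ℂ) - 1) / 2))) *
          MvPolynomial.eval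
            (fun i => ((x : EuclideanSpace ℝ (Fin (d + 1))) i : ℂ)) (q n))) :
    (∫ t in (0 : ℝ)..(2 * Real.pi),
      ∫ x in {x : Metric.sphere (0 : EuclideanSpace ℝ (Fin (d + 1))) 1 |
          0 < (x : EuclideanSpace ℝ (Fin (d + 1))) (Fin.last d)},
        ‖deriv (fun s => u s x) t‖ ^ 2
        ∂(volume : Measure (EuclideanSpace ℝ (Fin (d + 1)))).toSphere)
    = Real.pi * ∑ n ∈ F, ((n : ℝ) + ((d : ℝ) - 1) / 2) ^ 2 *
        ((∫ x : Metric.sphere (0 : EuclideanSpace ℝ (Fin (d + 1))) 1,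
            ‖MvPolynomial.eval
              (fun i => ((x : EuclideanSpace ℝ (Fin (d + 1))) i : ℂ)) (p n)‖ ^ 2
            ∂(volume : Measure (EuclideanSpace ℝ (Fin (d + 1)))).toSphere)
          + (∫ x : Metric.sphere (0 : EuclideanSpace ℝ (Fin (d + 1))) 1,
            ‖MvPolynomial.eval
              (fun i => ((x : EuclideanSpace ℝ (Fin (d + 1))) i : ℂ)) (q n)‖ ^ 2
            ∂(volume : Measure (EuclideanSpace ℝ (Fin (d + 1)))).toSphere)) := by
  exact observability_perturbed_wave_sphere_general volume
    (euclideanSpace_proj_ne_zero (Fin.last d)) (one_le_two.trans hd) F _ _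
    (fun n _ ↦ memLp_eval_sphere (p n) 2 _) (fun n _ ↦ memLp_eval_sphere (q n) 2 _)
    (fun n hn ↦ norm_eval_neg_sphere (hphom n hn)) (fun n hn ↦ norm_eval_neg_sphere (hqhom n hn))
    u hu
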